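/- (Key identity in the proof of Lemma 4.1, scalar form) For all integers a, α ∈ ℤ and all natural numbers μ, λ ∈ ℕ, the following identity holds in ℚ(v): [a+α ∣ μ] · [α ∣ λ] = Σ_{j=0}^{μ} Σ_{β=0}^{min(λ, μ−j)} v^{(a+λ)(μ−j) − α(j+β)} · [a ∣ j] · [α ∣ λ+μ−j−β] · [λ+μ−j−β ; β, λ−β, μ−j−β]. -/

import Mathlib

open Finset

noncomputable section

/-- The field `ℚ(v)` of rational functions over `ℚ`. -/
abbrev K : Type := RatFunc ℚ

/-- The indeterminate `v`. -/
def v : K := RatFunc.X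

/-- `[i] = (v^i - v^{-i})/(v - v^{-1})`. -/
def qint (i : ℤ) : K := (v ^ i - v ^ (-i)) / (v - v⁻¹)

/-- `[t]! = [1][2]⋯[t]`. -/
def qfact (t : ℕ) : K := ∏ s ∈ Finset.range t, qint (s + 1)

/-- The Gaussian binomial coefficient `[N ∣ t] = ([N][N-1]⋯[N-t+1])/[t]!`. -/
def qbinom (N : ℤ) (t : ℕ) : K := (∏ s ∈ Finset.range t, qint (N - s)) / qfact t

/-- The q-trinomial coefficient `[a+b+c ; a, b, c] = [a+b+c]!/([a]![b]![c]!)`. -/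
def qtri (a b c : ℕ) : K := qfact (a + b + c) / (qfact a * qfact b * qfact c)

lemma v_ne : v ≠ 0 := RatFunc.X_ne_zero

lemma v_pow_ne (n : ℕ) (hn : n ≠ 0) : v ^ n ≠ 1 := by
  intro h
  have h2 : (algebraMap (Polynomial ℚ) (RatFunc ℚ)) (Polynomial.X ^ n) =
      (algebraMap (Polynomial ℚ) (RatFunc ℚ)) 1 := by
    rw [map_pow, map_one, RatFunc.algebraMap_X]; exact h
  have h3 := RatFunc.algebraMap_injective ℚ h2
  have h4 := congrArg Polynomial.natDegree h3
  simp at h4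
  exact hn h4

lemma sub_ne (n : ℕ) (hn : n ≠ 0) : v ^ (n : ℤ) - v ^ (-(n : ℤ)) ≠ 0 := by
  intro h
  apply v_pow_ne (n + n) (by omega)
  have h1 : v ^ (n : ℤ) = v ^ (-(n : ℤ)) := sub_eq_zero.mp h
  rw [← zpow_natCast, Nat.cast_add, zpow_add₀ v_ne]
  nth_rewrite 1 [h1]
  rw [← zpow_add₀ v_ne]; simp

lemma den_ne : v - v⁻¹ ≠ 0 := by
  have := sub_ne 1 one_ne_zero
  simpa using this

lemma qint_ne (n : ℕ) : qint ((n : ℤ) + 1) ≠ 0 := by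
  have := sub_ne (n + 1) (by omega)
  push_cast at this
  exact div_ne_zero this den_ne

lemma qint_zero : qint 0 = 0 := by simp [qint]

lemma qint_add (x y : ℤ) : qint (x + y) = v ^ (-y) * qint x + v ^ x * qint y := by
  unfold qint
  rw [← mul_div_assoc, ← mul_div_assoc, ← add_div]
  congr 1
  rw [mul_sub, mul_sub]
  simp only [← zpow_add₀ v_ne]
  rw [show -y + x = x + -y by ring, show -y + -x = -(x + y) by ring]
  ring

lemma qfact_ne (n : ℕ) : qfact n ≠ 0 :=
  Finset.prod_ne_zero_iff.mpr fun s _ => qint_ne s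

lemma qfact_succ (n : ℕ) : qfact (n + 1) = qfact n * qint ((n : ℤ) + 1) := by
  simp [qfact, Finset.prod_range_succ]

lemma qbinom_succ (N : ℤ) (t : ℕ) :
    qint ((t : ℤ) + 1) * qbinom N (t + 1) = qint (N - t) * qbinom N t := by
  unfold qbinom
  rw [qfact_succ, Finset.prod_range_succ]
  have := qint_ne t
  have := qfact_ne t
  field_simp

lemma qbinom_zero (N : ℤ) : qbinom N 0 = 1 := by simp [qbinom, qfact]

lemma vandermonde (a b : ℤ) (m : ℕ) : qbinom (a + b) m =
    ∑ j ∈ Finset.range (m + 1), v ^ (a * ((m : ℤ) - j) - b * j) *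
      (qbinom a j * qbinom b (m - j)) := by
  induction m with
  | zero => simp [qbinom_zero]
  | succ m ih =>
    apply mul_left_cancel₀ (qint_ne m)
    rw [qbinom_succ, ih, Finset.mul_sum, Finset.mul_sum]
    have key : ∀ i ∈ Finset.range (m + 1 + 1),
        qint ((m : ℤ) + 1) * (v ^ (a * (((m + 1 : ℕ) : ℤ) - i) - b * i) *
          (qbinom a i * qbinom b (m + 1 - i))) =
        v ^ (a * ((m : ℤ) + 1 - i) - b * i + ((m : ℤ) + 1 - i)) * qint i *
          (qbinom a i * qbinom b (m + 1 - i)) +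
        v ^ (a * ((m : ℤ) + 1 - i) - b * i - i) * qint ((m : ℤ) + 1 - i) *
          (qbinom a i * qbinom b (m + 1 - i)) := by
      intro i _
      have h := qint_add ((m : ℤ) + 1 - i) i
      rw [sub_add_cancel] at h
      have c : (((m + 1 : ℕ) : ℤ) - i) = (m : ℤ) + 1 - i := by push_cast; ring
      have d : v ^ (a * ((m : ℤ) + 1 - i) - b * i - i) =
          v ^ (a * ((m : ℤ) + 1 - i) - b * i) * v ^ (-(i : ℤ)) := by
        rw [← zpow_add₀ v_ne]; rfl
      rw [h, c, zpow_add₀ v_ne _ ((m : ℤ) + 1 - i), d]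
      ring
    rw [Finset.sum_congr rfl key, Finset.sum_add_distrib,
      Finset.sum_range_succ' (fun i : ℕ => v ^ (a * ((m : ℤ) + 1 - i) - b * i +
        ((m : ℤ) + 1 - i)) * qint i * (qbinom a i * qbinom b (m + 1 - i))),
      Finset.sum_range_succ (fun i : ℕ => v ^ (a * ((m : ℤ) + 1 - i) - b * i - i) *
        qint ((m : ℤ) + 1 - i) * (qbinom a i * qbinom b (m + 1 - i)))]
    have e : (m : ℤ) + 1 - ((m + 1 : ℕ) : ℤ) = 0 := by push_cast; ring
    rw [e]
    simp only [Nat.cast_zero, qint_zero, mul_zero, zero_mul, add_zero]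
    rw [← Finset.sum_add_distrib]
    apply Finset.sum_congr rfl
    intro j hj
    have hj' : j ≤ m := by simpa [Nat.lt_succ_iff] using hj
    obtain ⟨k, rfl⟩ := Nat.exists_eq_add_of_le hj'
    have h1 : j + k + 1 - (j + 1) = k := by omega
    have h2 : j + k + 1 - j = k + 1 := by omega
    have h3 : j + k - j = k := by omega
    rw [h1, h2, h3]
    have q1 := qbinom_succ a j
    have q2 := qbinom_succ b k
    have q3 := qint_add (a - j) (b - k)
    have e1 : a + b - ((j + k : ℕ) : ℤ) = a - j + (b - k) := by push_cast; ring
    have e2 : ((j + k : ℕ) : ℤ) + 1 - j = (k : ℤ) + 1 := by push_cast; ring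
    rw [e1, q3, e2]
    have z1 : v ^ (a * (((j + k : ℕ) : ℤ) + 1 - ((j + 1 : ℕ) : ℤ)) - b * ((j + 1 : ℕ) : ℤ) +
        (((j + k : ℕ) : ℤ) + 1 - ((j + 1 : ℕ) : ℤ))) =
        v ^ (a * (((j + k : ℕ) : ℤ) - j) - b * j) * v ^ (-(b - k)) := by
      rw [← zpow_add₀ v_ne]; congr 1; push_cast; ring
    have z2 : v ^ (a * ((k : ℤ) + 1) - b * j - j) =
        v ^ (a * (((j + k : ℕ) : ℤ) - j) - b * j) * v ^ (a - j) := by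
      rw [← zpow_add₀ v_ne]; congr 1; push_cast; ring
    rw [z1, z2]
    push_cast at q1 q2 ⊢
    linear_combination
      (-(v ^ (a * ((j : ℤ) + k - j) - b * j) * v ^ (-(b - k)) * qbinom b k)) * q1
      - (v ^ (a * ((j : ℤ) + k - j) - b * j) * v ^ (a - j) * qbinom a j) * q2

lemma qbinom_nat_mul (n k : ℕ) :
    qbinom ((n + k : ℕ) : ℤ) k * (qfact n * qfact k) = qfact (n + k) := by
  have h : ∀ k : ℕ, qfact (n + k) = qfact n * ∏ s ∈ Finset.range k, qint ((n : ℤ) + s + 1) := by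
    intro k
    induction k with
    | zero => simp
    | succ k ih =>
      rw [← add_assoc, qfact_succ, ih, Finset.prod_range_succ]; push_cast; ring
  rw [h, ← Finset.prod_range_reflect]
  have h2 : ∏ j ∈ Finset.range k, qint ((n : ℤ) + ((k - 1 - j : ℕ) : ℤ) + 1) =
      ∏ s ∈ Finset.range k, qint (((n + k : ℕ) : ℤ) - s) := by
    apply Finset.prod_congr rfl
    intro s hs
    have := Finset.mem_range.mp hs
    congr 1
    omega
  rw [h2, qbinom]
  have := qfact_ne k
  field_simp

lemma qbinom_nat_zero (n k : ℕ) (h : n < k) : qbinom (n : ℤ) k = 0 := by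
  unfold qbinom
  rw [Finset.prod_eq_zero (Finset.mem_range.mpr h) (by simp [qint_zero]), zero_div]

lemma qbinom_mul (b : ℤ) (l n : ℕ) :
    qbinom b l * qbinom (b - l) n * (qfact l * qfact n) = qbinom b (l + n) * qfact (l + n) := by
  unfold qbinom
  rw [Finset.prod_range_add]
  have := qfact_ne l
  have := qfact_ne n
  have := qfact_ne (l + n)
  field_simp
  congr 1
  apply Finset.prod_congr rfl
  intro s _
  congr 1
  push_cast; ring

lemma prod_expand (b : ℤ) (m l : ℕ) : qbinom b m * qbinom b l =
    ∑ β ∈ Finset.range (min l m + 1), v ^ ((l : ℤ) * m - b * β) *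
      (qbinom b (l + m - β) * qtri β (l - β) (m - β)) := by
  have h := vandermonde l (b - l) m
  rw [add_sub_cancel] at h
  rw [h, Finset.sum_mul]
  symm
  have hs : Finset.range (min l m + 1) ⊆ Finset.range (m + 1) := by
    intro x; simp only [Finset.mem_range]; omega
  rw [← Finset.sum_subset hs]
  · apply Finset.sum_congr rfl
    intro β hβ
    have hβ' := Finset.mem_range.mp hβ
    obtain ⟨p, rfl⟩ := Nat.exists_eq_add_of_le (show β ≤ l by omega)
    obtain ⟨r, rfl⟩ := Nat.exists_eq_add_of_le (show β ≤ m by omega)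
    have e1 : β + p + (β + r) - β = β + p + r := by omega
    have e2 : β + p - β = p := by omega
    have e3 : β + r - β = r := by omega
    rw [e1, e2, e3]
    have z : ((β + p : ℕ) : ℤ) * (((β + r : ℕ) : ℤ) - β) - (b - ((β + p : ℕ) : ℤ)) * β =
        ((β + p : ℕ) : ℤ) * ((β + r : ℕ) : ℤ) - b * β := by ring
    rw [z, mul_assoc]
    congr 1
    have q1 := qbinom_mul b (β + p) r
    have q2 := qbinom_nat_mul p β
    rw [add_comm p β] at q2
    have n1 := qfact_ne β
    have n2 := qfact_ne p
    have n3 := qfact_ne r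
    have n4 := qfact_ne (β + p)
    unfold qtri
    rw [mul_div_assoc', ← q1, ← q2]
    field_simp
  · intro x hx hx'
    simp only [Finset.mem_range] at hx hx'
    rw [qbinom_nat_zero l x (by omega)]
    ring

/-- The key identity in the proof of Lemma 4.1 (scalar form):
`[a+α ∣ μ]·[α ∣ λ] = ∑_{j=0}^{μ} ∑_{β=0}^{min(λ,μ-j)}
  v^{(a+λ)(μ-j) - α(j+β)} [a ∣ j] [α ∣ λ+μ-j-β] [λ+μ-j-β ; β, λ-β, μ-j-β]`. -/
theorem lemma_4_1_key (a α : ℤ) (μ lam : ℕ) :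
    qbinom (a + α) μ * qbinom α lam =
      ∑ j ∈ Finset.range (μ + 1), ∑ β ∈ Finset.range (min lam (μ - j) + 1),
        v ^ ((a + (lam : ℤ)) * ((μ : ℤ) - (j : ℤ)) - α * ((j : ℤ) + (β : ℤ))) *
          qbinom a j * qbinom α (lam + μ - j - β) * qtri β (lam - β) (μ - j - β) := by
  rw [vandermonde, Finset.sum_mul]
  apply Finset.sum_congr rfl
  intro j hj
  have hj' : j ≤ μ := by simpa [Nat.lt_succ_iff] using hj
  rw [mul_assoc, mul_assoc, prod_expand, Finset.mul_sum, Finset.mul_sum]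
  apply Finset.sum_congr rfl
  intro β hβ
  have e : lam + (μ - j) - β = lam + μ - j - β := by omega
  have z : (a + (lam : ℤ)) * ((μ : ℤ) - (j : ℤ)) - α * ((j : ℤ) + (β : ℤ)) =
      (a * ((μ : ℤ) - j) - α * j) + ((lam : ℤ) * ((μ - j : ℕ) : ℤ) - α * β) := by
    rw [Nat.cast_sub hj']; ring
  rw [z, zpow_add₀ v_ne, e]
  ring
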